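/- Let G be a cyclic group of order n = p^α with p prime and α ≥ 2, and let S be a zero-sum sequence over G all of whose terms have order n. Then min L(S) ≤ min{ |S|/2, 2|S|/(n+1) + 3(n−1)(1/2 + log(n/2)) }. -/

import Mathlib

/-- A minimal zero-sum sequence over an abelian group. -/
def IsMinZS {G : Type*} [AddCommGroup G] (S : Multiset G) : Prop :=
  S ≠ 0 ∧ S.sum = 0 ∧ ∀ T : Multiset G, T ≤ S → T ≠ 0 → T ≠ S → T.sum ≠ 0

/-- The minimal length of a factorization of a zero-sum sequence into
minimal zero-sum sequences. -/
noncomputable def minL {G : Type*} [AddCommGroup G] (S : Multiset G) : ℕ :=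
  sInf { n | ∃ F : Multiset (Multiset G),
    (∀ B ∈ F, IsMinZS B) ∧ F.sum = S ∧ Multiset.card F = n }

/-!
Let `n = |G|` and `d = n - 1`. Atoms `g ^ n` are split off first; each uses up `n` terms, so they
contribute at most `|S| / n`. Now every multiplicity in `S` is at most `d`, hence `|S| ≤ d ^ 2`. If
`|S| ≥ 2 d` and `g` is a term of maximal multiplicity `m`, Chowla's theorem shows that already the
short subsums of the terms of `S` different from `g` cover `G`; a short `W` with sum `-m g` gives a
zero-sum subsequence `T = W g ^ m` of `S`. Each atom of `T` contains a term of `W`, so `T` has at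
most `|W|` atoms, which works out to at most `2 d |T| / (d + |S|)`. For `|S| ≤ 2 d` the same bound
holds with `T = S`. It is at most `2 d` times the drop of `log (d + |S|)` when `T` is removed, and
the total drop is at most `log (d + d ^ 2) - log d = log n`.
-/

open Finset
open scoped Pointwise

section Factorization

variable {G : Type*} [AddCommGroup G] {F F' : Multiset (Multiset G)} {S T : Multiset G} {g : G}

/-- `F` is a factorization of the sequence `S` into minimal zero-sum sequences; its length is
`Multiset.card F`. -/
def IsFactorization (F : Multiset (Multiset G)) (S : Multiset G) : Prop :=
  (∀ B ∈ F, IsMinZS B) ∧ F.sum = S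

theorem isFactorization_zero : IsFactorization (0 : Multiset (Multiset G)) 0 := by
  simp [IsFactorization]

theorem IsMinZS.isFactorization_singleton (hS : IsMinZS S) : IsFactorization {S} S := by
  simpa [IsFactorization] using hS

theorem IsFactorization.add (hF : IsFactorization F S) (hF' : IsFactorization F' T) :
    IsFactorization (F + F') (S + T) :=
  ⟨fun B hB ↦ (Multiset.mem_add.1 hB).elim (hF.1 B) (hF'.1 B), by
    rw [Multiset.sum_add, hF.2, hF'.2]⟩

theorem exists_isFactorization (hS : S.sum = 0) : ∃ F, IsFactorization F S := by
  induction S using Multiset.strongInductionOn with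
  | ih S ih =>
    by_cases hS0 : S = 0
    · exact ⟨0, hS0 ▸ isFactorization_zero⟩
    by_cases hmin : IsMinZS S
    · exact ⟨{S}, hmin.isFactorization_singleton⟩
    obtain ⟨T, hTS, hT0, hTne, hT⟩ : ∃ T ≤ S, T ≠ 0 ∧ T ≠ S ∧ T.sum = 0 := by
      by_contra! hcon
      exact hmin ⟨hS0, hS, hcon⟩
    obtain ⟨R, rfl⟩ := Multiset.le_iff_exists_add.1 hTS
    have hR : R.sum = 0 := by simpa [hT] using hS
    obtain ⟨F, hF⟩ := ih T (lt_of_le_of_ne hTS hTne) hT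
    obtain ⟨F', hF'⟩ := ih R (lt_add_of_pos_left R (pos_iff_ne_zero.2 hT0)) hR
    exact ⟨F + F', hF.add hF'⟩

theorem IsFactorization.minL_le_card (hF : IsFactorization F S) : minL S ≤ Multiset.card F :=
  Nat.sInf_le ⟨F, hF.1, hF.2, rfl⟩

theorem exists_isFactorization_card_eq_minL (hS : S.sum = 0) :
    ∃ F, IsFactorization F S ∧ Multiset.card F = minL S := by
  obtain ⟨F₀, hF₀⟩ := exists_isFactorization hS
  obtain ⟨F, hF, hFS, hcard⟩ := Nat.sInf_mem (s := { n | ∃ F : Multiset (Multiset G),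
    (∀ B ∈ F, IsMinZS B) ∧ F.sum = S ∧ Multiset.card F = n }) ⟨_, F₀, hF₀.1, hF₀.2, rfl⟩
  exact ⟨F, ⟨hF, hFS⟩, hcard⟩

theorem minL_add_le (hS : S.sum = 0) (hT : T.sum = 0) : minL (S + T) ≤ minL S + minL T := by
  obtain ⟨F, hF, hFcard⟩ := exists_isFactorization_card_eq_minL hS
  obtain ⟨F', hF', hFcard'⟩ := exists_isFactorization_card_eq_minL hT
  simpa [hFcard, hFcard'] using (hF.add hF').minL_le_card

theorem IsMinZS.minL_le_one (hS : IsMinZS S) : minL S ≤ 1 := by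
  simpa using hS.isFactorization_singleton.minL_le_card

theorem isMinZS_replicate_addOrderOf (hg : 0 < addOrderOf g) :
    IsMinZS (Multiset.replicate (addOrderOf g) g) := by
  refine ⟨?_, by simp [addOrderOf_nsmul_eq_zero], fun T hT hT0 hTne hTsum ↦ ?_⟩
  · rw [← Multiset.card_pos, Multiset.card_replicate]
    exact hg
  obtain ⟨j, hj, rfl⟩ := Multiset.le_replicate_iff.1 hT
  have hj0 : j ≠ 0 := by rintro rfl; exact hT0 rfl
  have hdvd : addOrderOf g ∣ j := addOrderOf_dvd_of_nsmul_eq_zero (by simpa using hTsum)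
  exact hTne (by rw [hj.antisymm (Nat.le_of_dvd (Nat.pos_of_ne_zero hj0) hdvd)])

theorem IsFactorization.card_mul_le (hF : IsFactorization F S) (w : Multiset G →+ ℕ) {c : ℕ}
    (hw : ∀ B ≤ S, IsMinZS B → c ≤ w B) : Multiset.card F * c ≤ w S := by
  have hle : ∀ x ∈ F.map w, c ≤ x := by
    simp only [Multiset.mem_map, forall_exists_index, and_imp, forall_apply_eq_imp_iff₂]
    exact fun B hB ↦ hw B (hF.2 ▸ Multiset.le_sum_of_mem hB) (hF.1 B hB)
  simpa [← map_multiset_sum, hF.2] using Multiset.card_nsmul_le_sum hle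

theorem IsFactorization.card_mul_two_le (hF : IsFactorization F S) (h0 : (0 : G) ∉ S) :
    Multiset.card F * 2 ≤ Multiset.card S := by
  refine hF.card_mul_le Multiset.cardHom fun B hBS ⟨hB0, hBsum, _⟩ ↦ ?_
  have hpos : 0 < Multiset.card B := Multiset.card_pos.2 hB0
  have hne_one : Multiset.card B ≠ 1 := by
    intro hB
    obtain ⟨x, rfl⟩ := Multiset.card_eq_one.1 hB
    rw [Multiset.sum_singleton] at hBsum
    exact h0 (hBsum ▸ Multiset.mem_of_le hBS (Multiset.mem_singleton_self x))
  exact (Nat.two_le_iff _).2 ⟨hpos.ne', hne_one⟩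

/-- A power of `g` shorter than the order of `g` is not zero-sum, so each atom contains a term
other than `g`. -/
theorem IsFactorization.card_add_count_le [DecidableEq G] (hF : IsFactorization F S)
    (hg : S.count g < addOrderOf g) :
    Multiset.card F + S.count g ≤ Multiset.card S := by
  have hatom : ∀ B ≤ S, IsMinZS B → 1 ≤ Multiset.countPAddMonoidHom (¬ g = ·) B := by
    rintro B hBS ⟨hB0, hBsum, _⟩
    by_contra! hlt
    have hall : ∀ x ∈ B, x = g := by
      simpa [Multiset.countP_eq_zero, eq_comm (a := g)] using hlt
    have hB : B = Multiset.replicate (Multiset.card B) g := Multiset.eq_replicate_card.2 hall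
    have hdvd : addOrderOf g ∣ Multiset.card B := by
      rw [hB, Multiset.sum_replicate] at hBsum
      exact addOrderOf_dvd_of_nsmul_eq_zero hBsum
    have hcard : Multiset.card B ≤ S.count g := Multiset.le_count_iff_replicate_le.2 (hB ▸ hBS)
    exact hg.not_ge ((Nat.le_of_dvd (Multiset.card_pos.2 hB0) hdvd).trans hcard)
  have hF_le := hF.card_mul_le _ hatom
  rw [mul_one, Multiset.coe_countPAddMonoidHom] at hF_le
  have hsplit : Multiset.card S = S.count g + Multiset.countP (¬ g = ·) S :=
    Multiset.card_eq_countP_add_countP (g = ·) S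
  lia

theorem minL_mul_two_le_card (hS : S.sum = 0) (h0 : (0 : G) ∉ S) :
    minL S * 2 ≤ Multiset.card S := by
  obtain ⟨F, hF⟩ := exists_isFactorization hS
  exact (Nat.mul_le_mul_right 2 hF.minL_le_card).trans (hF.card_mul_two_le h0)

theorem minL_replicate_add_le_card [DecidableEq G] {m : ℕ}
    (hsum : (Multiset.replicate m g + S).sum = 0)
    (hg : (Multiset.replicate m g + S).count g < addOrderOf g) :
    minL (Multiset.replicate m g + S) ≤ Multiset.card S := by
  obtain ⟨F, hF⟩ := exists_isFactorization hsum
  have hle := hF.card_add_count_le hg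
  rw [Multiset.count_add, Multiset.count_replicate_self, Multiset.card_add,
    Multiset.card_replicate] at hle
  have hmin := hF.minL_le_card
  lia

end Factorization

section Chowla

variable {G : Type*} [AddCommGroup G] [DecidableEq G] {A B : Finset G} {b : G}

theorem eq_univ_of_vadd_finset_subset (hA : A.Nonempty) (hb : AddSubgroup.zmultiples b = ⊤)
    (h : b +ᵥ A ⊆ A) : (A : Set G) = Set.univ := by
  have hstab : AddAction.stabilizer G A = ⊤ := by
    rw [← top_le_iff, ← hb, AddSubgroup.zmultiples_le]
    exact AddAction.mem_stabilizer_finset_iff_vadd_finset_subset.2 h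
  obtain ⟨a, ha⟩ := hA
  refine Set.eq_univ_of_forall fun x ↦ mem_coe.2 ?_
  have hx : x - a ∈ AddAction.stabilizer G A := hstab ▸ AddSubgroup.mem_top _
  simpa using (AddAction.mem_stabilizer_finset.1 hx a).2 ha

/-- Chowla's theorem. The Dyson transform at `a ∈ A` with `a + b ∉ A` removes `b` from `B` while
keeping `0`, so one can induct on the size of `B`. -/
theorem add_eq_univ_or_card_add_card_le (hA : A.Nonempty) (h0 : (0 : G) ∈ B)
    (hB : ∀ b ∈ B, b ≠ 0 → AddSubgroup.zmultiples b = ⊤) :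
    ((A + B : Finset G) : Set G) = Set.univ ∨ #A + #B ≤ #(A + B) + 1 := by
  induction hk : #B using Nat.strong_induction_on generalizing A B with
  | _ k ih =>
    by_cases hB0 : ∀ b ∈ B, b = 0
    · obtain rfl : B = {0} := by grind
      simp [← hk]
    push Not at hB0
    obtain ⟨b, hbB, hb0⟩ := hB0
    by_cases hAb : b +ᵥ A ⊆ A
    · left
      rw [← Set.univ_subset_iff, ← eq_univ_of_vadd_finset_subset hA (hB b hbB hb0) hAb, coe_subset]
      exact subset_add_left A h0
    obtain ⟨a, ha, hab⟩ : ∃ a ∈ A, b + a ∉ A := by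
      simpa [not_subset, mem_vadd_finset] using hAb
    set x := addDysonETransform a (A, B)
    have hcard : #x.1 + #x.2 = #A + #B := addDysonETransform.card a (A, B)
    have hsub : x.1 + x.2 ⊆ A + B := addDysonETransform.subset a (A, B)
    have hx₂ : x.2 ⊆ B := inter_subset_left
    have hb : b ∉ x.2 := by
      simp [x, mem_neg_vadd_finset_iff, add_comm a b, hab]
    have h0x : (0 : G) ∈ x.2 := by
      simp [x, h0, mem_neg_vadd_finset_iff, ha]
    have hlt : #x.2 < k := hk ▸ card_lt_card ((ssubset_iff_of_subset hx₂).2 ⟨b, hbB, hb⟩)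
    have hx := ih _ hlt (A := x.1) (B := x.2) (hA.mono subset_union_left) h0x
      (fun c hc ↦ hB c (hx₂ hc)) rfl
    rcases hx with h | h
    · left
      rwa [← Set.univ_subset_iff, ← h, coe_subset]
    · right
      have := card_le_card hsub
      lia

end Chowla

section Multiplicity

variable {α : Type*} [DecidableEq α] {U : Multiset α} {l m : ℕ}

theorem sum_min_count_succ (U : Multiset α) (l : ℕ) :
    ∑ x ∈ U.toFinset, min (U.count x) (l + 1) =
      ∑ x ∈ (U - U.dedup).toFinset, min ((U - U.dedup).count x) l + #U.toFinset := by
  have hsub : (U - U.dedup).toFinset ⊆ U.toFinset :=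
    Multiset.toFinset_subset.2 (Multiset.subset_of_le (Multiset.sub_le_self _ _))
  rw [sum_subset hsub fun x _ hx ↦ by simp_all, card_eq_sum_ones, ← sum_add_distrib]
  refine sum_congr rfl fun x hx ↦ ?_
  have hxU : x ∈ U := Multiset.mem_toFinset.1 hx
  have hpos : 0 < U.count x := Multiset.count_pos.2 hxU
  rw [Multiset.count_sub, Multiset.count_dedup, if_pos hxU]
  lia

theorem mul_card_le_mul_sum_min_count (hm : ∀ x, U.count x ≤ m) (hl : l ≤ m) :
    l * Multiset.card U ≤ m * ∑ x ∈ U.toFinset, min (U.count x) l := by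
  rw [← Multiset.toFinset_sum_count_eq U, mul_sum, mul_sum]
  refine sum_le_sum fun x _ ↦ ?_
  rcases le_total (U.count x) l with h | h
  · rw [min_eq_left h]
    exact Nat.mul_le_mul_right _ hl
  · rw [min_eq_right h, mul_comm]
    exact Nat.mul_le_mul_right _ (hm x)

theorem card_le_mul_of_count_le {x₀ : α} {d : ℕ} (hα : Nat.card α = d + 1) (hx₀ : x₀ ∉ U)
    (hm : ∀ x, U.count x ≤ m) : Multiset.card U ≤ d * m := by
  have : Finite α := Nat.finite_of_card_ne_zero (by lia)
  have : Fintype α := Fintype.ofFinite α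
  have hsupp : #U.toFinset ≤ d := by
    have hle : #(insert x₀ U.toFinset) ≤ Fintype.card α := card_le_univ _
    rw [card_insert_of_notMem (by simpa using hx₀), ← Nat.card_eq_fintype_card, hα] at hle
    lia
  calc Multiset.card U = ∑ x ∈ U.toFinset, U.count x := (Multiset.toFinset_sum_count_eq U).symm
    _ ≤ #U.toFinset * m := sum_le_card_nsmul _ _ _ fun x _ ↦ hm x
    _ ≤ d * m := Nat.mul_le_mul_right m hsupp

end Multiplicity

theorem pos_of_natCard_eq_add_one {α : Type*} [Nontrivial α] {d : ℕ}
    (h : Nat.card α = d + 1) : 0 < d := by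
  have : Finite α := Nat.finite_of_card_ne_zero (by lia)
  have : 1 < Nat.card α := Finite.one_lt_card
  lia

theorem zero_notMem_of_zmultiples_eq_top {G : Type*} [AddCommGroup G] [Nontrivial G]
    {S : Multiset G} (hS : ∀ g ∈ S, AddSubgroup.zmultiples g = ⊤) :
    (0 : G) ∉ S := fun h0 ↦
  bot_ne_top (AddSubgroup.zmultiples_zero_eq_bot.symm.trans (hS 0 h0))

section Subsums

variable {G : Type*} [AddCommGroup G] [DecidableEq G] {U : Multiset G} {l m d : ℕ} {x : G}

/-- The set `Σ_{≤ l}(U)` of sums of subsequences of `U` of length at most `l`, the empty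
subsequence included. -/
def subsums (U : Multiset G) (l : ℕ) : Finset G :=
  ((U.powerset.filter (Multiset.card · ≤ l)).map Multiset.sum).toFinset

theorem mem_subsums : x ∈ subsums U l ↔ ∃ W ≤ U, Multiset.card W ≤ l ∧ W.sum = x := by
  simp [subsums, and_assoc]

theorem zero_mem_subsums : 0 ∈ subsums U l :=
  mem_subsums.2 ⟨0, by simp⟩

theorem subsums_sub_dedup_add_subset :
    subsums (U - U.dedup) l + insert 0 U.toFinset ⊆ subsums U (l + 1) := by
  intro x hx
  obtain ⟨y, hy, b, hb, rfl⟩ := mem_add.1 hx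
  obtain ⟨W, hWU, hWl, rfl⟩ := mem_subsums.1 hy
  rw [mem_subsums]
  rcases mem_insert.1 hb with rfl | hb
  · exact ⟨W, hWU.trans (Multiset.sub_le_self _ _), by lia, by simp⟩
  · have hbU : ({b} : Multiset G) ≤ U.dedup := by simpa using hb
    refine ⟨W + {b}, ?_, by simpa using hWl, by simp⟩
    calc W + {b} ≤ (U - U.dedup) + U.dedup := add_le_add hWU hbU
      _ = U := Multiset.sub_add_cancel (Multiset.dedup_le U)

variable [Nontrivial G]

theorem subsums_eq_univ_or_sum_min_count_lt_card
    (hU : ∀ g ∈ U, AddSubgroup.zmultiples g = ⊤) :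
    (subsums U l : Set G) = Set.univ ∨
      ∑ x ∈ U.toFinset, min (U.count x) l < #(subsums U l) := by
  induction l generalizing U with
  | zero => exact Or.inr (by simpa using ⟨0, zero_mem_subsums⟩)
  | succ l ih =>
    have hsub := subsums_sub_dedup_add_subset (U := U) (l := l)
    have h0 : (0 : G) ∉ U.toFinset := by simpa using zero_notMem_of_zmultiples_eq_top hU
    have hchowla := add_eq_univ_or_card_add_card_le (A := subsums (U - U.dedup) l)
      (B := insert 0 U.toFinset) ⟨0, zero_mem_subsums⟩ (mem_insert_self _ _)
      fun b hb hb0 ↦ hU b (by simpa [hb0] using hb)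
    rcases hchowla with h | h
    · exact Or.inl (Set.univ_subset_iff.1 (h ▸ coe_subset.2 hsub))
    rcases ih fun g hg ↦ hU g (Multiset.mem_of_le (Multiset.sub_le_self _ _) hg) with hA | hA
    · left
      rw [← Set.univ_subset_iff, ← hA, coe_subset]
      exact (subset_add_left _ (mem_insert_self _ _)).trans hsub
    · right
      have hle := card_le_card hsub
      rw [card_insert_of_notMem h0] at h
      rw [sum_min_count_succ]
      lia

theorem subsums_eq_univ (hG : Nat.card G = d + 1)
    (hU : ∀ g ∈ U, AddSubgroup.zmultiples g = ⊤)
    (hd : d ≤ ∑ x ∈ U.toFinset, min (U.count x) l) : (subsums U l : Set G) = Set.univ := by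
  have : Finite G := Nat.finite_of_card_ne_zero (by lia)
  refine (subsums_eq_univ_or_sum_min_count_lt_card hU).elim id fun h ↦
    Set.eq_of_subset_of_ncard_le (Set.subset_univ _) ?_
  rw [Set.ncard_univ, Set.ncard_coe_finset]
  lia

theorem exists_le_sum_eq_card_mul_card_le (hG : Nat.card G = d + 1)
    (hU : ∀ g ∈ U, AddSubgroup.zmultiples g = ⊤) (hm : ∀ x, U.count x ≤ m)
    (hd : d ≤ Multiset.card U) (x : G) :
    ∃ W ≤ U, W.sum = x ∧ Multiset.card W * Multiset.card U ≤ 2 * (d * m) := by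
  have hd0 : 0 < d := pos_of_natCard_eq_add_one hG
  have hUpos : 0 < Multiset.card U := hd0.trans_le hd
  have hUle : Multiset.card U ≤ d * m :=
    card_le_mul_of_count_le hG (zero_notMem_of_zmultiples_eq_top hU) hm
  have hm0 : 0 < m := Nat.pos_of_mul_pos_left (hUpos.trans_le hUle)
  -- the least `l` for which `mul_card_le_mul_sum_min_count` gives the bound `hsum` below
  set l := d * m ⌈/⌉ Multiset.card U
  have hlm : l ≤ m := (ceilDiv_le_iff_le_mul hUpos).2 (Nat.mul_le_mul_right m hd)
  have hle_l : d * m ≤ l * Multiset.card U :=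
    (le_smul_ceilDiv hUpos).trans_eq (mul_comm _ _)
  have hl_le : l * Multiset.card U ≤ 2 * (d * m) := by
    have := Nat.div_mul_le_self (d * m + Multiset.card U - 1) (Multiset.card U)
    rw [← Nat.ceilDiv_eq_add_pred_div] at this
    lia
  have hsum : d ≤ ∑ x ∈ U.toFinset, min (U.count x) l := by
    refine Nat.le_of_mul_le_mul_left ?_ hm0
    calc m * d = d * m := mul_comm m d
      _ ≤ l * Multiset.card U := hle_l
      _ ≤ _ := mul_card_le_mul_sum_min_count hm hlm
  have hx : x ∈ (subsums U l : Set G) := subsums_eq_univ hG hU hsum ▸ Set.mem_univ x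
  obtain ⟨W, hWU, hWl, hW⟩ := mem_subsums.1 (mem_coe.1 hx)
  exact ⟨W, hWU, hW, (Nat.mul_le_mul_right _ hWl).trans hl_le⟩

end Subsums

section RealBounds

theorem div_le_log_sub_log {a b : ℝ} (ha : 0 < a) (hb : 0 < b) :
    (b - a) / b ≤ Real.log b - Real.log a := by
  rw [← Real.log_div hb.ne' ha.ne', sub_div, div_self hb.ne', ← inv_div b a]
  exact Real.one_sub_inv_le_log_of_pos (div_pos hb ha)

theorem two_mul_log_le_three_mul {x : ℝ} (hx : 2 ≤ x) :
    2 * Real.log x ≤ 3 * (1 / 2 + Real.log (x / 2)) := by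
  have hlog : Real.log 2 ≤ Real.log x := Real.log_le_log two_pos hx
  rw [Real.log_div (by linarith) two_ne_zero]
  linarith [Real.log_two_lt_d9]

end RealBounds

section Bounds

variable {G : Type*} [AddCommGroup G] [Nontrivial G] {S : Multiset G} {d : ℕ}

theorem exists_le_sum_eq_zero_minL_mul_le_of_two_mul_le_card [DecidableEq G]
    (hG : Nat.card G = d + 1)
    (hS : ∀ g ∈ S, AddSubgroup.zmultiples g = ⊤) (hcount : ∀ x, S.count x ≤ d)
    (hd : 2 * d ≤ Multiset.card S) :
    ∃ T ≤ S, T ≠ 0 ∧ T.sum = 0 ∧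
      minL T * (d + Multiset.card S) ≤ 2 * d * Multiset.card T := by
  have hd0 : 0 < d := pos_of_natCard_eq_add_one hG
  have hS0 : S ≠ 0 := Multiset.card_pos.1 (by lia)
  obtain ⟨g, hgS, hgmax⟩ := exists_max_image S.toFinset (S.count ·) (by simpa using hS0)
  rw [Multiset.mem_toFinset] at hgS
  set m := S.count g
  have hmd : m ≤ d := hcount g
  have hm0 : 0 < m := Multiset.count_pos.2 hgS
  have hmax : ∀ x, S.count x ≤ m := fun x ↦ by
    by_cases hx : x ∈ S
    · exact hgmax x (Multiset.mem_toFinset.2 hx)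
    · simp [Multiset.count_eq_zero_of_notMem hx]
  obtain ⟨U, hSU⟩ : ∃ U, S = Multiset.replicate m g + U :=
    Multiset.le_iff_exists_add.1 (Multiset.le_count_iff_replicate_le.1 le_rfl)
  have hUS : U ≤ S := hSU ▸ Multiset.le_add_left _ _
  have hcardS : Multiset.card S = m + Multiset.card U := by
    rw [hSU, Multiset.card_add, Multiset.card_replicate]
  obtain ⟨W, hWU, hWsum, hW⟩ := exists_le_sum_eq_card_mul_card_le hG
    (fun x hx ↦ hS x (Multiset.mem_of_le hUS hx))
    (fun x ↦ (Multiset.count_le_of_le x hUS).trans (hmax x)) (by lia) (-(m • g))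
  set T := Multiset.replicate m g + W with hT
  have hTS : T ≤ S := hSU ▸ add_le_add le_rfl hWU
  have hTsum : T.sum = 0 := by simp [hT, hWsum]
  have hTcard : Multiset.card T = m + Multiset.card W := by simp [hT]
  refine ⟨T, hTS, Multiset.card_pos.1 (by lia), hTsum, ?_⟩
  have hgord : addOrderOf g = d + 1 :=
    (addOrderOf_eq_card_of_zmultiples_eq_top (hS g hgS)).trans hG
  have hTg : T.count g < addOrderOf g :=
    hgord ▸ Nat.lt_succ_of_le ((Multiset.count_le_of_le g hTS).trans hmd)
  have hminL : minL T ≤ Multiset.card W := minL_replicate_add_le_card hTsum hTg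
  calc minL T * (d + Multiset.card S)
      ≤ Multiset.card W * (d + (m + Multiset.card U)) := by rw [hcardS]; gcongr
    _ = Multiset.card W * d + Multiset.card W * m + Multiset.card W * Multiset.card U := by ring
    _ ≤ Multiset.card W * d + Multiset.card W * d + 2 * (d * m) := by gcongr
    _ = 2 * d * Multiset.card T := by rw [hTcard]; ring

theorem exists_le_sum_eq_zero_minL_mul_le [DecidableEq G] (hG : Nat.card G = d + 1)
    (hS : ∀ g ∈ S, AddSubgroup.zmultiples g = ⊤) (hcount : ∀ x, S.count x ≤ d)
    (hsum : S.sum = 0) (hS0 : S ≠ 0) :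
    ∃ T ≤ S, T ≠ 0 ∧ T.sum = 0 ∧
      minL T * (d + Multiset.card S) ≤ 2 * d * Multiset.card T := by
  rcases le_total (2 * d) (Multiset.card S) with hd | hd
  · exact exists_le_sum_eq_zero_minL_mul_le_of_two_mul_le_card hG hS hcount hd
  · refine ⟨S, le_rfl, hS0, hsum, ?_⟩
    have hhalf := minL_mul_two_le_card hsum (zero_notMem_of_zmultiples_eq_top hS)
    calc minL S * (d + Multiset.card S) ≤ minL S * (2 * (2 * d)) := by gcongr; lia
      _ = 2 * d * (minL S * 2) := by ring
      _ ≤ 2 * d * Multiset.card S := by gcongr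

theorem minL_le_mul_log_sub_log [DecidableEq G] (hG : Nat.card G = d + 1)
    (hS : ∀ g ∈ S, AddSubgroup.zmultiples g = ⊤) (hcount : ∀ x, S.count x ≤ d)
    (hsum : S.sum = 0) :
    (minL S : ℝ) ≤ 2 * d * (Real.log (d + Multiset.card S) - Real.log d) := by
  have hd : (0 : ℝ) < d := Nat.cast_pos.2 (pos_of_natCard_eq_add_one hG)
  induction S using Multiset.strongInductionOn with
  | ih S ih =>
    rcases eq_or_ne S 0 with rfl | hS0
    · simpa using isFactorization_zero.minL_le_card
    obtain ⟨T, hTS, hT0, hTsum, hT⟩ := exists_le_sum_eq_zero_minL_mul_le hG hS hcount hsum hS0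
    obtain ⟨R, rfl⟩ := Multiset.le_iff_exists_add.1 hTS
    have hRsum : R.sum = 0 := by simpa [hTsum] using hsum
    have hRS : R ≤ T + R := Multiset.le_add_left R T
    have hR := ih R (lt_add_of_pos_left R (pos_iff_ne_zero.2 hT0))
      (fun g hg ↦ hS g (Multiset.mem_of_le hRS hg))
      (fun x ↦ (Multiset.count_le_of_le x hRS).trans (hcount x)) hRsum
    have hadd : (minL (T + R) : ℝ) ≤ minL T + minL R := by
      exact_mod_cast minL_add_le hTsum hRsum
    have hTreal : (minL T : ℝ) * (d + (Multiset.card T + Multiset.card R)) ≤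
        2 * d * Multiset.card T := by
      rw [Multiset.card_add] at hT
      exact_mod_cast hT
    rw [Multiset.card_add, Nat.cast_add]
    set t : ℝ := (Multiset.card T : ℝ)
    set r : ℝ := (Multiset.card R : ℝ)
    have hlog := div_le_log_sub_log (a := d + r) (b := d + (t + r)) (by positivity) (by positivity)
    have hTlog : (minL T : ℝ) ≤
        2 * d * (Real.log (d + (t + r)) - Real.log (d + r)) := by
      calc (minL T : ℝ) ≤ 2 * d * t / (d + (t + r)) := by rwa [le_div_iff₀ (by positivity)]
        _ = 2 * d * ((d + (t + r) - (d + r)) / (d + (t + r))) := by ring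
        _ ≤ _ := by gcongr
    linarith

theorem minL_le_mul_log_of_count_le [DecidableEq G] (hG : Nat.card G = d + 1)
    (hS : ∀ g ∈ S, AddSubgroup.zmultiples g = ⊤) (hcount : ∀ x, S.count x ≤ d)
    (hsum : S.sum = 0) : (minL S : ℝ) ≤ 2 * d * Real.log (d + 1) := by
  have hd : (0 : ℝ) < d := Nat.cast_pos.2 (pos_of_natCard_eq_add_one hG)
  have hcard : (Multiset.card S : ℝ) ≤ d * d := by
    exact_mod_cast card_le_mul_of_count_le hG (zero_notMem_of_zmultiples_eq_top hS) hcount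
  calc (minL S : ℝ) ≤ 2 * d * (Real.log (d + Multiset.card S) - Real.log d) :=
        minL_le_mul_log_sub_log hG hS hcount hsum
    _ ≤ 2 * d * (Real.log (d * (d + 1)) - Real.log d) := by gcongr; linarith
    _ = 2 * d * Real.log (d + 1) := by
        rw [Real.log_mul hd.ne' (by positivity), add_sub_cancel_left]

theorem minL_le_card_div_add_mul_log (hG : Nat.card G = d + 1)
    (hS : ∀ g ∈ S, AddSubgroup.zmultiples g = ⊤) (hsum : S.sum = 0) :
    (minL S : ℝ) ≤ (Multiset.card S : ℝ) / (d + 1) + 2 * d * Real.log (d + 1) := by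
  classical
  induction S using Multiset.strongInductionOn with
  | ih S ih =>
    by_cases hcount : ∀ x, S.count x ≤ d
    · exact (minL_le_mul_log_of_count_le hG hS hcount hsum).trans
        (le_add_of_nonneg_left (by positivity))
    push Not at hcount
    obtain ⟨g, hg⟩ := hcount
    have hgord : addOrderOf g = d + 1 :=
      (addOrderOf_eq_card_of_zmultiples_eq_top (hS g (Multiset.count_pos.1 (by lia)))).trans hG
    set T := Multiset.replicate (d + 1) g with hTdef
    have hT : IsMinZS T := by
      rw [hTdef, ← hgord]
      exact isMinZS_replicate_addOrderOf (by lia)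
    obtain ⟨R, rfl⟩ : ∃ R, S = T + R :=
      Multiset.le_iff_exists_add.1 (Multiset.le_count_iff_replicate_le.1 hg)
    have hRsum : R.sum = 0 := by simpa [hT.2.1] using hsum
    have hR := ih R (lt_add_of_pos_left R (pos_iff_ne_zero.2 hT.1))
      (fun x hx ↦ hS x (Multiset.mem_add.2 (Or.inr hx))) hRsum
    have hadd : (minL (T + R) : ℝ) ≤ 1 + minL R := by
      exact_mod_cast (minL_add_le hT.2.1 hRsum).trans (Nat.add_le_add_right hT.minL_le_one _)
    have hcard : (Multiset.card (T + R) : ℝ) / (d + 1) = 1 + Multiset.card R / (d + 1) := by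
      rw [Multiset.card_add, hTdef, Multiset.card_replicate]
      push_cast
      field_simp
    linarith

end Bounds

theorem stmt10_general {G : Type*} [AddCommGroup G] {n : ℕ} (hn : 2 ≤ n) (hcard : Nat.card G = n)
    {S : Multiset G} (hord : ∀ g ∈ S, addOrderOf g = n) (hsum : S.sum = 0) :
    (minL S : ℝ) ≤ min ((Multiset.card S : ℝ) / 2)
      (2 * (Multiset.card S : ℝ) / (n + 1) +
        3 * ((n : ℝ) - 1) * (1 / 2 + Real.log ((n : ℝ) / 2))) := by
  have : Finite G := Nat.finite_of_card_ne_zero (by lia)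
  have : Nontrivial G := Finite.one_lt_card_iff_nontrivial.1 (by lia)
  have hgen : ∀ g ∈ S, AddSubgroup.zmultiples g = ⊤ := fun g hg ↦
    AddSubgroup.eq_top_of_card_eq _ (by rw [Nat.card_zmultiples, hord g hg, hcard])
  refine le_min ?_ ?_
  · rw [le_div_iff₀ two_pos]
    exact_mod_cast minL_mul_two_le_card hsum (zero_notMem_of_zmultiples_eq_top hgen)
  obtain ⟨d, rfl⟩ : ∃ d, n = d + 1 := ⟨n - 1, by lia⟩
  have hlog := two_mul_log_le_three_mul (x := (d + 1 : ℕ)) (by exact_mod_cast hn)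
  push_cast at hlog ⊢
  calc (minL S : ℝ) ≤ Multiset.card S / (d + 1) + d * (2 * Real.log (d + 1)) := by
        linarith [minL_le_card_div_add_mul_log hcard hgen hsum]
    _ ≤ 2 * Multiset.card S / (d + 1 + 1) + d * (3 * (1 / 2 + Real.log ((d + 1) / 2))) := by
        refine add_le_add ?_ (by gcongr)
        rw [div_le_div_iff₀ (by positivity) (by positivity)]
        nlinarith [(Nat.cast_nonneg (Multiset.card S) : (0 : ℝ) ≤ _)]
    _ = _ := by ring

theorem stmt10 (G : Type*) [AddCommGroup G] [Fintype G] (hcyc : IsAddCyclic G)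
    (p α n : ℕ) (hp : p.Prime) (hα : 2 ≤ α) (hnpα : n = p ^ α)
    (hcard : Fintype.card G = n)
    (S : Multiset G) (hord : ∀ g ∈ S, addOrderOf g = n) (hsum : S.sum = 0) :
    (minL S : ℝ) ≤ min ((Multiset.card S : ℝ) / 2)
      (2 * (Multiset.card S : ℝ) / (n + 1) +
        3 * ((n : ℝ) - 1) * (1 / 2 + Real.log ((n : ℝ) / 2))) :=
  stmt10_general (hnpα ▸ hp.two_le.trans (Nat.le_self_pow (by lia) p))
    (Nat.card_eq_fintype_card.trans hcard) hord hsum
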